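/- For every δ > 0 there exists an infinitely differentiable function χ_δ : ℝ → ℝ such that: (i) 0 ≤ χ_δ(t) ≤ 1 for all t ∈ ℝ, χ_δ ≡ 1 on some neighborhood of 0, and χ_δ(t) = 0 whenever |t| ≥ δ; (ii) |χ_δ'(t)| ≤ δ·|t|^{−1} and |χ_δ''(t)| ≤ δ·t^{−2} for all t ≠ 0. (Lemma 3.4 of the paper: existence of logarithmic cutoff functions.) -/

import Mathlib

/-!
Fix a smooth step `f` with `f = 1` on `(-∞, 0]` and `f = 0` on `[1, ∞)`, and put
`χ t = f (c * log (|t| / ρ))`. Differentiating in the logarithmic variable costs a factor `c` and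
one power of `|t|⁻¹` each time, so the scale-invariant quantities `|t| |χ'|` and `t² |χ''|` are
`O(c)` as `c → 0`, uniformly in `ρ`. The transition takes place in `ρ ≤ |t| ≤ ρ * exp (1 / c)`, so
once `c` is chosen the support is controlled by taking `ρ = δ * exp (-1 / c)`.
-/

open Filter Topology

section StepFunction

variable {E : Type*} [NormedAddCommGroup E] [NormedSpace ℝ E] {f : ℝ → E} {u v : E}

theorem hasCompactSupport_deriv_of_eq_const {a b : ℝ} (ha : ∀ x ≤ a, f x = u)
    (hb : ∀ x, b ≤ x → f x = v) : HasCompactSupport (deriv f) := by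
  refine HasCompactSupport.intro (isCompact_Icc (a := a) (b := b)) fun x hx => ?_
  rcases not_and_or.mp hx with hxa | hxb
  · have hconst : f =ᶠ[𝓝 x] fun _ => u := by
      filter_upwards [Iio_mem_nhds (not_le.mp hxa)] with y hy using ha y hy.le
    rw [hconst.deriv_eq, deriv_const]
  · have hconst : f =ᶠ[𝓝 x] fun _ => v := by
      filter_upwards [Ioi_mem_nhds (not_le.mp hxb)] with y hy using hb y hy.le
    rw [hconst.deriv_eq, deriv_const]

theorem exists_norm_deriv_le_and_norm_deriv_deriv_le (hf : ContDiff ℝ 2 f)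
    (hsupp : HasCompactSupport (deriv f)) :
    ∃ C, (∀ x, ‖deriv f x‖ ≤ C) ∧ ∀ x, ‖deriv (deriv f) x‖ ≤ C := by
  have hf' : ContDiff ℝ 1 (deriv f) := hf.deriv'
  obtain ⟨A, hA⟩ := hsupp.exists_bound_of_continuous hf'.continuous
  obtain ⟨B, hB⟩ := hsupp.deriv.exists_bound_of_continuous hf'.continuous_deriv_one
  exact ⟨max A B, fun x => (hA x).trans (le_max_left A B), fun x => (hB x).trans (le_max_right A B)⟩

end StepFunction

theorem exists_pos_mul_add_one_mul_le (C : ℝ) {ε : ℝ} (hε : 0 < ε) :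
    ∃ c > 0, c * (c + 1) * C ≤ ε := by
  have hlim : Tendsto (fun c : ℝ => c * (c + 1) * C) (𝓝[>] 0) (𝓝 0) :=
    (Continuous.tendsto' (by fun_prop) 0 0 (by simp)).mono_left nhdsWithin_le_nhds
  obtain ⟨c, hcε, hc⟩ := ((hlim.eventually_le_const hε).and self_mem_nhdsWithin).exists
  exact ⟨c, hc, hcε⟩

/-- The even function obtained from the profile `f` by the logarithmic change of variable
`x = c * log (|t| / ρ)`. The absolute value is implicit in `Real.log`, and the convention
`Real.log 0 = 0` gives the value `f 0` at the origin, which is the right one for profiles that are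
constant on `(-∞, 0]`. -/
noncomputable def logRescale {α : Type*} (f : ℝ → α) (ρ c t : ℝ) : α :=
  f (c * Real.log (t / ρ))

namespace logRescale

section Plateau

variable {α : Type*} {f : ℝ → α} {u v : α} {ρ c t : ℝ}

theorem eq_of_abs_le (hf : ∀ x ≤ 0, f x = u) (hc : 0 ≤ c) (ht : |t| ≤ ρ) :
    logRescale f ρ c t = u := by
  have hρ : 0 ≤ ρ := (abs_nonneg t).trans ht
  have hlog : Real.log (t / ρ) ≤ 0 := by
    rw [← Real.log_abs, abs_div, abs_of_nonneg hρ]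
    exact Real.log_nonpos (by positivity) (div_le_one_of_le₀ ht hρ)
  exact hf _ (mul_nonpos_of_nonneg_of_nonpos hc hlog)

theorem eq_of_le_abs (hf : ∀ x, 1 ≤ x → f x = v) (hρ : 0 < ρ) (hc : 0 < c)
    (ht : ρ * Real.exp c⁻¹ ≤ |t|) : logRescale f ρ c t = v := by
  have hlog : c⁻¹ ≤ Real.log (t / ρ) := by
    have hexp : Real.exp c⁻¹ ≤ |t| / ρ := (le_div_iff₀' hρ).mpr ht
    rw [← Real.log_abs, abs_div, abs_of_pos hρ]
    exact (Real.le_log_iff_exp_le ((Real.exp_pos _).trans_le hexp)).mpr hexp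
  exact hf _ ((inv_le_iff_one_le_mul₀' hc).mp hlog)

end Plateau

section Deriv

variable {E : Type*} [NormedAddCommGroup E] [NormedSpace ℝ E] {f : ℝ → E} {u v : E} {ρ c C t : ℝ}

theorem contDiff {n : WithTop ℕ∞} (hf : ContDiff ℝ n f) (hfu : ∀ x ≤ 0, f x = u) (hρ : 0 < ρ)
    (hc : 0 ≤ c) : ContDiff ℝ n (logRescale f ρ c) := by
  refine contDiff_iff_contDiffAt.mpr fun t => ?_
  rcases eq_or_ne t 0 with rfl | ht
  · have hconst : logRescale f ρ c =ᶠ[𝓝 0] fun _ => u := by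
      filter_upwards [Metric.closedBall_mem_nhds (0 : ℝ) hρ] with s hs
      exact eq_of_abs_le hfu hc (by simpa using hs)
    exact contDiffAt_const.congr_of_eventuallyEq hconst
  · exact hf.contDiffAt.comp t
      (contDiffAt_const.mul ((contDiffAt_id.div_const ρ).log (div_ne_zero ht hρ.ne')))

theorem hasDerivAt (hf : DifferentiableAt ℝ f (c * Real.log (t / ρ))) (hρ : ρ ≠ 0) (ht : t ≠ 0) :
    HasDerivAt (logRescale f ρ c) ((c * t⁻¹) • logRescale (deriv f) ρ c t) t := by
  have hlog : HasDerivAt (fun s => c * Real.log (s / ρ)) (c * t⁻¹) t := by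
    refine (((hasDerivAt_id t).div_const ρ).log (div_ne_zero ht hρ)).const_mul c |>.congr_deriv ?_
    rw [id_eq]
    field_simp
  exact hf.hasDerivAt.scomp t hlog

theorem deriv_deriv (hf : ContDiff ℝ 2 f) (hρ : ρ ≠ 0) (ht : t ≠ 0) :
    deriv (deriv (logRescale f ρ c)) t =
      (c * (t ^ 2)⁻¹) • (c • logRescale (deriv (deriv f)) ρ c t - logRescale (deriv f) ρ c t) := by
  have hf' : ContDiff ℝ 1 (deriv f) := hf.deriv'
  have hderiv : deriv (logRescale f ρ c) =ᶠ[𝓝 t]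
      fun s => (c * s⁻¹) • logRescale (deriv f) ρ c s := by
    filter_upwards [isOpen_ne.mem_nhds ht] with s hs
    exact (hasDerivAt (hf.differentiable two_ne_zero _) hρ hs).deriv
  have hmul := ((hasDerivAt_inv ht).const_mul c).smul
    (hasDerivAt (c := c) (hf'.differentiable one_ne_zero _) hρ ht)
  rw [hderiv.deriv_eq]
  refine hmul.deriv.trans ?_
  rw [show c * (t ^ 2)⁻¹ = c * t⁻¹ * t⁻¹ by ring, show c * -(t ^ 2)⁻¹ = -(c * t⁻¹ * t⁻¹) by ring]
  module

theorem norm_deriv_le (hf : Differentiable ℝ f) (hC : ∀ x, ‖deriv f x‖ ≤ C) (hρ : ρ ≠ 0)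
    (ht : t ≠ 0) : ‖deriv (logRescale f ρ c) t‖ ≤ |c| * C * |t|⁻¹ := by
  rw [(hasDerivAt (hf _) hρ ht).deriv, norm_smul, norm_mul, norm_inv, Real.norm_eq_abs,
    Real.norm_eq_abs, mul_right_comm]
  gcongr
  exact hC _

theorem norm_deriv_deriv_le (hf : ContDiff ℝ 2 f) (hC : ∀ x, ‖deriv f x‖ ≤ C)
    (hC' : ∀ x, ‖deriv (deriv f) x‖ ≤ C) (hρ : ρ ≠ 0) (ht : t ≠ 0) :
    ‖deriv (deriv (logRescale f ρ c)) t‖ ≤ |c| * (|c| + 1) * C * (t ^ 2)⁻¹ := by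
  calc ‖deriv (deriv (logRescale f ρ c)) t‖
    _ = |c| * (t ^ 2)⁻¹ *
        ‖c • logRescale (deriv (deriv f)) ρ c t - logRescale (deriv f) ρ c t‖ := by
      rw [deriv_deriv hf hρ ht, norm_smul, norm_mul, Real.norm_eq_abs,
        Real.norm_of_nonneg (by positivity)]
    _ ≤ |c| * (t ^ 2)⁻¹ * (|c| * C + C) := by
      gcongr
      refine (norm_sub_le _ _).trans (add_le_add ?_ (hC _))
      rw [norm_smul, Real.norm_eq_abs]
      gcongr
      exact hC' _
    _ = |c| * (|c| + 1) * C * (t ^ 2)⁻¹ := by ring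

theorem exists_pos_forall_norm_deriv_le (hf : ContDiff ℝ 2 f) (hfu : ∀ x ≤ 0, f x = u)
    (hfv : ∀ x, 1 ≤ x → f x = v) {ε : ℝ} (hε : 0 < ε) :
    ∃ c > 0, ∀ ρ ≠ 0, ∀ t ≠ 0, ‖deriv (logRescale f ρ c) t‖ ≤ ε * |t|⁻¹ ∧
      ‖deriv (deriv (logRescale f ρ c)) t‖ ≤ ε * (t ^ 2)⁻¹ := by
  obtain ⟨C, hC, hC'⟩ := exists_norm_deriv_le_and_norm_deriv_deriv_le hf
    (hasCompactSupport_deriv_of_eq_const hfu hfv)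
  obtain ⟨c, hc, hcε⟩ := exists_pos_mul_add_one_mul_le C hε
  have hC₀ : 0 ≤ C := (norm_nonneg _).trans (hC 0)
  have hcC : c * C ≤ ε := by
    refine le_trans ?_ hcε
    gcongr
    exact le_mul_of_one_le_right hc.le (by linarith)
  refine ⟨c, hc, fun ρ hρ t ht => ⟨?_, ?_⟩⟩
  · refine (norm_deriv_le (hf.differentiable two_ne_zero) hC hρ ht).trans ?_
    rw [abs_of_pos hc]
    gcongr
  · refine (norm_deriv_deriv_le hf hC hC' hρ ht).trans ?_
    rw [abs_of_pos hc]
    gcongr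

end Deriv

end logRescale

/-- Lemma 3.4: existence of logarithmic cutoff functions. For every `δ > 0` there is a
smooth function `χ : ℝ → ℝ` with `0 ≤ χ ≤ 1`, `χ ≡ 1` near `0`, `χ = 0` for `|t| ≥ δ`,
and `|χ'(t)| ≤ δ |t|⁻¹`, `|χ''(t)| ≤ δ t⁻²` for all `t ≠ 0`. -/
theorem cutoff_exists (δ : ℝ) (hδ : 0 < δ) :
    ∃ χ : ℝ → ℝ, ContDiff ℝ (⊤ : ℕ∞) χ ∧
      (∀ t, 0 ≤ χ t ∧ χ t ≤ 1) ∧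
      (∃ ε > 0, ∀ t : ℝ, |t| ≤ ε → χ t = 1) ∧
      (∀ t : ℝ, δ ≤ |t| → χ t = 0) ∧
      (∀ t : ℝ, t ≠ 0 → |deriv χ t| ≤ δ * |t|⁻¹ ∧ |deriv (deriv χ) t| ≤ δ * (t ^ 2)⁻¹) := by
  let f : ℝ → ℝ := fun x => Real.smoothTransition (1 - x)
  have hf {n : ℕ∞} : ContDiff ℝ n f :=
    Real.smoothTransition.contDiff.comp (contDiff_const.sub contDiff_id)
  have hf₁ : ∀ x ≤ 0, f x = 1 := fun x hx => Real.smoothTransition.one_of_one_le (by linarith)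
  have hf₀ : ∀ x, 1 ≤ x → f x = 0 := fun x hx =>
    Real.smoothTransition.zero_of_nonpos (by linarith)
  obtain ⟨c, hc, hderiv⟩ := logRescale.exists_pos_forall_norm_deriv_le (hf (n := 2)) hf₁ hf₀ hδ
  let ρ := δ * Real.exp (-c⁻¹)
  have hρ : 0 < ρ := by positivity
  have hρδ : ρ * Real.exp c⁻¹ = δ := by simp [ρ, mul_assoc, ← Real.exp_add]
  exact ⟨logRescale f ρ c, logRescale.contDiff hf hf₁ hρ hc.le,
    fun t => ⟨Real.smoothTransition.nonneg _, Real.smoothTransition.le_one _⟩,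
    ⟨ρ, hρ, fun t => logRescale.eq_of_abs_le hf₁ hc.le⟩,
    fun t ht => logRescale.eq_of_le_abs hf₀ hρ hc (hρδ.trans_le ht), hderiv ρ hρ.ne'⟩
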